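/- Let 𝓕 be a family of subsets of a set U whose shatter function satisfies π_𝓕(m) = o(m^k) for some integer k (i.e., there is a function h : ℕ → ℝ with π_𝓕(m) ≤ h(m) for all m and h(m)/m^k → 0 as m → ∞), and let p ≥ k. Then there is a constant N such that the following holds for every finite set V ⊆ U: if for every V' ⊆ V with |V'| ≤ p there is some F ∈ 𝓕 with V' ⊆ F, then there is a subfamily 𝓕' ⊆ 𝓕 with |𝓕'| ≤ N and V ⊆ ⋃ 𝓕'. -/

import Mathlib

open Filter

open Classical in
theorem pq_uniform {U : Type*} (𝓕 : Set (Set U)) (k n : ℕ)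
    (hn : ∀ A : Finset U, A.card ≤ k * n →
      ((fun F => F ∩ (A : Set U)) '' 𝓕).ncard < n ^ k)
    {ι : Type*} [Fintype ι] [Nonempty ι] (u : ι → U) (Φ : (Fin k → ι) → Set U)
    (hΦ : ∀ e, Φ e ∈ 𝓕) (hu : ∀ e j, u (e j) ∈ Φ e) :
    ∃ e, Fintype.card ι ≤ (n ^ k * (k * n)) * (Finset.univ.filter (fun t => u t ∈ Φ e)).card := by
  by_contra! hcon
  set B := n ^ k * (k * n) with hB
  let S : (Fin k → Fin n) × (Fin k × Fin n) → Finset (Fin k × Fin n → ι) := fun q =>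
    Finset.univ.filter (fun v => q.2.2 ≠ q.1 q.2.1 ∧ u (v q.2) ∈ Φ (fun j => v (j, q.1 j)))
  have hcover : (Finset.univ : Finset (Fin k × Fin n → ι)) ⊆ Finset.univ.biUnion S := by
    intro v _
    set A : Finset U := Finset.univ.image (fun y => u (v y)) with hA
    have hAc : A.card ≤ k * n := by
      refine Finset.card_image_le.trans ?_
      simp
    have hlt := hn A hAc
    have hfin : ((fun F => F ∩ (A : Set U)) '' 𝓕).Finite := by
      refine (A.finite_toSet.powerset).subset ?_
      rintro _ ⟨F, _, rfl⟩
      exact Set.inter_subset_right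
    have : ∃ f f' : Fin k → Fin n, f ≠ f' ∧
        Φ (fun j => v (j, f j)) ∩ (A : Set U) = Φ (fun j => v (j, f' j)) ∩ (A : Set U) := by
      rw [Set.ncard_eq_toFinset_card _ hfin] at hlt
      have := Finset.exists_ne_map_eq_of_card_lt_of_maps_to
        (s := (Finset.univ : Finset (Fin k → Fin n))) (t := hfin.toFinset) (by simpa using hlt)
        (f := fun f => Φ (fun j => v (j, f j)) ∩ (A : Set U)) (by
          intro f _
          simp only [Set.Finite.coe_toFinset]
          exact ⟨_, hΦ _, rfl⟩)
      obtain ⟨f, _, f', _, h1, h2⟩ := this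
      exact ⟨f, f', h1, h2⟩
    obtain ⟨f, f', hne, heq⟩ := this
    obtain ⟨j, hj⟩ := Function.ne_iff.mp hne
    refine Finset.mem_biUnion.mpr ⟨(f, (j, f' j)), Finset.mem_univ _, ?_⟩
    simp only [S, Finset.mem_filter, Finset.mem_univ, true_and]
    refine ⟨hj.symm, ?_⟩
    have h1 : u (v (j, f' j)) ∈ Φ (fun j => v (j, f' j)) ∩ (A : Set U) := by
      refine ⟨hu (fun j => v (j, f' j)) j, ?_⟩
      simp [hA]
    rw [← heq] at h1
    exact h1.1
  have hS : ∀ q, B * (S q).card < Fintype.card (Fin k × Fin n → ι) := by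
    rintro ⟨f, p⟩
    by_cases hp : p.2 ≠ f p.1
    swap
    · have : S (f, p) = ∅ := by
        simp only [S]
        apply Finset.filter_false_of_mem
        tauto
      rw [this, Finset.card_empty, mul_zero]
      exact Fintype.card_pos
    · have hpj : ∀ j, (j, f j) ≠ p := by
        rintro j rfl
        exact hp rfl
      let E := Equiv.funSplitAt p ι
      have hcard : (S (f, p)).card = ∑ g : ({y // y ≠ p} → ι),
          (Finset.univ.filter (fun t => u t ∈ Φ (fun j => g ⟨(j, f j), hpj j⟩))).card := by
        simp only [S, Finset.card_filter]
        rw [Fintype.sum_equiv E _ (fun tg : ι × ({y // y ≠ p} → ι) =>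
          if u tg.1 ∈ Φ (fun j => tg.2 ⟨(j, f j), hpj j⟩) then 1 else 0)]
        · rw [Fintype.sum_prod_type_right]
        · intro v
          simp [E, hp]
      rw [hcard, Finset.mul_sum, Fintype.card_congr E, Fintype.card_prod, mul_comm (Fintype.card ι)]
      calc _ < ∑ g : ({y // y ≠ p} → ι), Fintype.card ι := by
            apply Finset.sum_lt_sum_of_nonempty Finset.univ_nonempty
            intro g _
            exact hcon _
        _ = _ := by simp
  have h1 := (Finset.card_le_card hcover).trans Finset.card_biUnion_le
  have hpos : 0 < Fintype.card (Fin k × Fin n → ι) := Fintype.card_pos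
  have hcardB : Fintype.card ((Fin k → Fin n) × (Fin k × Fin n)) = B := by
    simp [hB]
  rw [Finset.card_univ] at h1
  rcases isEmpty_or_nonempty ((Fin k → Fin n) × (Fin k × Fin n)) with hE | hE
  · rw [Finset.univ_eq_empty, Finset.sum_empty] at h1
    omega
  · have h2 : ∑ q, B * (S q).card <
        ∑ q : (Fin k → Fin n) × (Fin k × Fin n), Fintype.card (Fin k × Fin n → ι) :=
      Finset.sum_lt_sum_of_nonempty Finset.univ_nonempty (fun q _ => hS q)
    rw [← Finset.mul_sum, Finset.sum_const, Finset.card_univ, hcardB, smul_eq_mul] at h2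
    exact absurd (Nat.mul_le_mul_left B h1) (not_le.mpr h2)

open Classical in
theorem pq_weighted {U : Type*} (𝓕 : Set (Set U)) (k n : ℕ)
    (hn : ∀ A : Finset U, A.card ≤ k * n →
      ((fun F => F ∩ (A : Set U)) '' 𝓕).ncard < n ^ k)
    (V : Finset U) (hV : ∀ V' ⊆ V, V'.card ≤ k → ∃ F ∈ 𝓕, (V' : Set U) ⊆ F) (w : U → ℕ) :
    ∃ F ∈ 𝓕, ∑ v ∈ V, w v ≤ (n ^ k * (k * n)) * ∑ v ∈ V.filter (fun v => v ∈ F), w v := by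
  let ι := Σ v : V, Fin (w v)
  have hcι : Fintype.card ι = ∑ v ∈ V, w v := by
    simp only [ι, Fintype.card_sigma, Fintype.card_fin]
    exact Finset.sum_coe_sort V w
  rcases isEmpty_or_nonempty ι with hE | hE
  · obtain ⟨F, hF, _⟩ := hV ∅ (by simp) (by simp)
    refine ⟨F, hF, ?_⟩
    rw [← hcι, Fintype.card_eq_zero]
    exact Nat.zero_le _
  · have : ∀ e : Fin k → ι, ∃ F ∈ 𝓕, ∀ j, ((e j).1 : U) ∈ F := by
      intro e
      obtain ⟨F, hF, hs⟩ := hV (Finset.univ.image (fun j => ((e j).1 : U)))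
        (by intro x; simp only [Finset.mem_image]; rintro ⟨j, _, rfl⟩; exact (e j).1.2)
        (Finset.card_image_le.trans (by simp))
      refine ⟨F, hF, fun j => hs ?_⟩
      simp
    choose Φ hΦ hu using this
    obtain ⟨e, he⟩ := pq_uniform 𝓕 k n hn (fun t : ι => (t.1 : U)) Φ hΦ hu
    refine ⟨Φ e, hΦ e, ?_⟩
    rw [← hcι]
    convert he using 2
    rw [Finset.card_filter, Fintype.sum_sigma, Finset.sum_filter, ← Finset.sum_coe_sort V]
    refine Finset.sum_congr rfl (fun v _ => ?_)
    split_ifs <;> simp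

open Classical in
theorem pq_mw {U : Type*} (𝓕 : Set (Set U)) (B : ℕ) (V : Finset U)
    (hw : ∀ w : U → ℕ, ∃ F ∈ 𝓕, ∑ v ∈ V, w v ≤ B * ∑ v ∈ V.filter (fun v => v ∈ F), w v)
    (hB : 0 < B) (T : ℕ) :
    ∃ G : Fin T → Set U, (∀ t, G t ∈ 𝓕) ∧
      ∑ v ∈ V, (2 : ℝ) ^ ((Finset.univ.filter (fun t => v ∉ G t)).card) ≤
        V.card * (2 - 1 / (B : ℝ)) ^ T := by
  induction T with
  | zero => exact ⟨Fin.elim0, fun t => t.elim0, by simp⟩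
  | succ T ih =>
    obtain ⟨G, hG, hle⟩ := ih
    obtain ⟨F, hF, hFw⟩ := hw (fun v => 2 ^ ((Finset.univ.filter (fun t => v ∉ G t)).card))
    refine ⟨Fin.cons F G, ?_, ?_⟩
    · intro t
      refine Fin.cases ?_ ?_ t <;> simp [hF, hG]
    · have hFw' : ∑ v ∈ V, (2 : ℝ) ^ ((Finset.univ.filter (fun t => v ∉ G t)).card) ≤
        B * ∑ v ∈ V.filter (fun v => v ∈ F),
          (2 : ℝ) ^ ((Finset.univ.filter (fun t => v ∉ G t)).card) := by
        exact_mod_cast hFw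
      have hstep : ∑ v ∈ V, (2 : ℝ) ^ ((Finset.univ.filter
            (fun t => v ∉ (Fin.cons F G : Fin (T + 1) → Set U) t)).card) =
          2 * ∑ v ∈ V, (2 : ℝ) ^ ((Finset.univ.filter (fun t => v ∉ G t)).card) -
          ∑ v ∈ V.filter (fun v => v ∈ F),
          (2 : ℝ) ^ ((Finset.univ.filter (fun t => v ∉ G t)).card) := by
        rw [Finset.sum_filter, Finset.mul_sum, ← Finset.sum_sub_distrib]
        refine Finset.sum_congr rfl (fun v _ => ?_)
        rw [Finset.card_filter, Fin.sum_univ_succ, Finset.card_filter]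
        simp only [Fin.cons_zero, Fin.cons_succ]
        by_cases hv : v ∈ F
        · simp [hv]; ring
        · simp [hv, pow_add]
      rw [hstep]
      set W := ∑ v ∈ V, (2 : ℝ) ^ ((Finset.univ.filter (fun t => v ∉ G t)).card)
      set W' := ∑ v ∈ V.filter (fun v => v ∈ F),
          (2 : ℝ) ^ ((Finset.univ.filter (fun t => v ∉ G t)).card)
      have hBr : (1 : ℝ) ≤ B := by exact_mod_cast hB
      have h1 : 1 / (B : ℝ) * W ≤ W' := by
        rw [div_mul_eq_mul_div, one_mul, div_le_iff₀ (by linarith)]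
        linarith
      have h2 : 1 / (B : ℝ) ≤ 1 := by
        rw [div_le_one (by linarith)]; exact hBr
      calc 2 * W - W' ≤ (2 - 1 / (B : ℝ)) * W := by linarith
        _ ≤ (2 - 1 / (B : ℝ)) * (V.card * (2 - 1 / (B : ℝ)) ^ T) :=
          mul_le_mul_of_nonneg_left hle (by linarith)
        _ = _ := by ring

/-- dual VC dimension bound -/
theorem pq_dualvc {U : Type*} [DecidableEq U] (𝓕 : Set (Set U)) (d : ℕ)
    (hd : ∀ A : Finset U, A.card ≤ d →
      ((fun F => F ∩ (A : Set U)) '' 𝓕).ncard < 2 ^ d)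
    (V : Finset U) {Y : Type*} [Fintype Y] [DecidableEq Y] (G : Y → Set U) (hG : ∀ y, G y ∈ 𝓕)
    [∀ v, DecidablePred (fun y => v ∈ G y)] :
    (V.image (fun v => Finset.univ.filter (fun y => v ∈ G y))).vcDim ≤ 2 ^ d := by
  refine Finset.sup_le fun s hs => ?_
  rw [Finset.mem_shatterer] at hs
  by_contra! hlt
  have : Nonempty (Finset (Fin d) ↪ s) := by
    apply Function.Embedding.nonempty_of_card_le
    simpa using hlt.le
  obtain ⟨g⟩ := this
  have hv : ∀ j : Fin d, ∃ v, ∀ S, v ∈ G (g S) ↔ j ∈ S := by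
    intro j
    obtain ⟨a, ha, hsa⟩ := hs (t := (Finset.univ.filter (fun S : Finset (Fin d) => j ∈ S)).image
      (fun S => (g S : Y))) (by
        intro y; simp only [Finset.mem_image]; rintro ⟨S, _, rfl⟩; exact (g S).2)
    obtain ⟨v, _, rfl⟩ := Finset.mem_image.mp ha
    refine ⟨v, fun S => ?_⟩
    have := Finset.ext_iff.mp hsa (g S)
    simpa using this
  choose v hv using hv
  set A : Finset U := Finset.univ.image v with hA
  have h1 := hd A (Finset.card_image_le.trans (by simp))
  have hfin : ((fun F => F ∩ (A : Set U)) '' 𝓕).Finite := by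
    refine (A.finite_toSet.powerset).subset ?_
    rintro _ ⟨F, _, rfl⟩
    exact Set.inter_subset_right
  have hinj : Function.Injective (fun S : Finset (Fin d) => G (g S) ∩ (A : Set U)) := by
    intro S S' h
    ext j
    have hj := Set.ext_iff.mp h (v j)
    have hm : v j ∈ (A : Set U) := by simp [hA]
    simp only [Set.mem_inter_iff, hm, and_true] at hj
    rw [← hv j S, hj, hv j S']
  have h2 : (Set.range (fun S : Finset (Fin d) => G (g S) ∩ (A : Set U))).ncard = 2 ^ d := by
    rw [← Set.image_univ, Set.ncard_image_of_injective _ hinj, Set.ncard_univ]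
    simp
  have h3 := Set.ncard_le_ncard (s := Set.range (fun S : Finset (Fin d) => G (g S) ∩ (A : Set U)))
    (by rintro _ ⟨S, rfl⟩; exact ⟨_, hG _, rfl⟩) hfin
  omega

/-- Few swap patterns push a fixed trace into the second half. -/
theorem pq_swap_count (m r : ℕ) (s : Finset (Fin m × Bool)) :
    2 ^ r * ((Finset.univ : Finset (Fin m → Bool)).filter (fun σ =>
      (∀ i, (i, σ i) ∉ s) ∧
        r ≤ (Finset.univ.filter (fun i => (i, !(σ i)) ∈ s)).card)).card ≤ 2 ^ m := by
  classical
  set Q := ((Finset.univ : Finset (Fin m → Bool)).filter (fun σ =>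
      (∀ i, (i, σ i) ∉ s) ∧
        r ≤ (Finset.univ.filter (fun i => (i, !(σ i)) ∈ s)).card)) with hQ
  rcases Q.eq_empty_or_nonempty with h0 | ⟨σ₀, hσ₀⟩
  · rw [h0]; simp
  · set I : Finset (Fin m) := Finset.univ.filter (fun i => (i, !(σ₀ i)) ∈ s) with hI
    simp only [hQ, Finset.mem_filter, Finset.mem_univ, true_and] at hσ₀
    have hdet : ∀ σ ∈ Q, ∀ i ∈ I, σ i = σ₀ i := by
      intro σ hσ i hi
      simp only [hQ, Finset.mem_filter, Finset.mem_univ, true_and] at hσ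
      simp only [hI, Finset.mem_filter, Finset.mem_univ, true_and] at hi
      by_contra hne
      have : σ i = !(σ₀ i) := by
        cases h1 : σ i <;> cases h2 : σ₀ i <;> simp_all
      exact hσ.1 i (this ▸ hi)
    have hcard : Q.card ≤ Fintype.card ({i // i ∉ I} → Bool) := by
      rw [← Finset.card_univ]
      refine Finset.card_le_card_of_injOn (fun σ i => σ i.1) (by simp) ?_
      intro σ hσ σ' hσ' h
      funext i
      by_cases hi : i ∈ I
      · rw [hdet σ hσ i hi, hdet σ' hσ' i hi]
      · exact congrFun h ⟨i, hi⟩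
    have h2 : Fintype.card ({i // i ∉ I} → Bool) = 2 ^ (m - I.card) := by
      simp [Fintype.card_subtype_compl]
    have hIm : I.card ≤ m := by simpa using Finset.card_le_univ I
    calc 2 ^ r * Q.card ≤ 2 ^ I.card * 2 ^ (m - I.card) :=
          Nat.mul_le_mul (Nat.pow_le_pow_right (by norm_num) hσ₀.2) (h2 ▸ hcard)
      _ = 2 ^ m := by rw [← pow_add]; congr 1; omega

/-- Reverse Markov: many samples hit a large set often. -/
theorem pq_many {X : Type*} [Fintype X] [DecidableEq X] [Nonempty X] (c r : ℕ) (hr : 0 < r)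
    (P : Finset X) (hP : Fintype.card X ≤ c * P.card) :
    Fintype.card (Fin (2 * c * r) → X) ≤ 2 * c *
      ((Finset.univ : Finset (Fin (2 * c * r) → X)).filter (fun y =>
        r ≤ (Finset.univ.filter (fun i => y i ∈ P)).card)).card := by
  set m := 2 * c * r with hm
  set Q := ((Finset.univ : Finset (Fin m → X)).filter (fun y =>
        r ≤ (Finset.univ.filter (fun i => y i ∈ P)).card)) with hQ
  have hone : ∀ i : Fin m, Fintype.card (Fin m → X) ≤
      c * ((Finset.univ : Finset (Fin m → X)).filter (fun y => y i ∈ P)).card := by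
    intro i
    let E := Equiv.funSplitAt i X
    have : ((Finset.univ : Finset (Fin m → X)).filter (fun y => y i ∈ P)).card =
        P.card * Fintype.card ({j // j ≠ i} → X) := by
      rw [Finset.card_filter, Fintype.sum_equiv E _ (fun tg : X × ({j // j ≠ i} → X) =>
          if tg.1 ∈ P then 1 else 0) (by intro v; simp [E]), Fintype.sum_prod_type_right]
      simp [mul_comm]
    rw [this, Fintype.card_congr E, Fintype.card_prod, ← mul_assoc]
    exact Nat.mul_le_mul_right _ hP
  have hsum : ∑ i : Fin m, ((Finset.univ : Finset (Fin m → X)).filter (fun y => y i ∈ P)).card =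
      ∑ y : Fin m → X, (Finset.univ.filter (fun i => y i ∈ P)).card := by
    simp only [Finset.card_filter]
    exact Finset.sum_comm
  have hupper : ∑ y : Fin m → X, (Finset.univ.filter (fun i => y i ∈ P)).card ≤
      m * Q.card + r * Fintype.card (Fin m → X) := by
    have : ∀ y : Fin m → X, (Finset.univ.filter (fun i => y i ∈ P)).card ≤
        m * (if r ≤ (Finset.univ.filter (fun i => y i ∈ P)).card then 1 else 0) + r := by
      intro y
      split_ifs with h
      · have := Finset.card_le_univ (Finset.univ.filter (fun i => y i ∈ P))
        simp only [Fintype.card_fin] at this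
        omega
      · omega
    refine (Finset.sum_le_sum (fun y _ => this y)).trans ?_
    rw [Finset.sum_add_distrib, ← Finset.mul_sum, ← Finset.card_filter, Finset.sum_const,
      Finset.card_univ, smul_eq_mul, mul_comm r]
  have hlower : m * Fintype.card (Fin m → X) ≤ c * ∑ i : Fin m,
      ((Finset.univ : Finset (Fin m → X)).filter (fun y => y i ∈ P)).card := by
    rw [Finset.mul_sum]
    calc m * Fintype.card (Fin m → X) = ∑ i : Fin m, Fintype.card (Fin m → X) := by simp
      _ ≤ _ := Finset.sum_le_sum (fun i _ => hone i)
  rw [hsum] at hlower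
  have h3 := hlower.trans (Nat.mul_le_mul_left c hupper)
  have hc : 0 < c := by
    rcases Nat.eq_zero_or_pos c with h | h
    · subst h
      have := Fintype.card_pos (α := X)
      omega
    · exact h
  have : (c * r) * Fintype.card (Fin m → X) ≤ (c * r) * (2 * c * Q.card) := by
    have e1 : m * Fintype.card (Fin m → X) = 2 * ((c * r) * Fintype.card (Fin m → X)) := by
      rw [hm]; ring
    have e2 : c * (m * Q.card + r * Fintype.card (Fin m → X)) =
      (c * r) * (2 * c * Q.card) + (c * r) * Fintype.card (Fin m → X) := by
      generalize Q.card = Qc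
      rw [hm]; ring
    omega
  exact Nat.le_of_mul_le_mul_left this (Nat.mul_pos hc hr)

/-- epsilon nets by double sampling -/
theorem pq_net {U X : Type*} [Fintype X] [Nonempty X] (V : Finset U) (R : U → X → Prop)
    [∀ v, DecidablePred (R v)]
    (c r M : ℕ) (hr : 0 < r) (hM : 2 * c * M < 2 ^ r)
    (hbig : ∀ v ∈ V, Fintype.card X ≤ c * (Finset.univ.filter (fun t => R v t)).card)
    (hpi : ∀ z : Fin (2 * c * r) × Bool → X,
      (V.image (fun v => Finset.univ.filter (fun y => R v (z y)))).card ≤ M) :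
    ∃ x : Fin (2 * c * r) → X, ∀ v ∈ V, ∃ i, R v (x i) := by
  classical
  by_contra! hcon
  set m := 2 * c * r with hm
  let Bad : (Fin m × Bool → X) → Prop := fun z =>
    ∃ v ∈ V, (∀ i, ¬ R v (z (i, false))) ∧ r ≤ (Finset.univ.filter (fun i => R v (z (i, true)))).card
  let K := (Finset.univ.filter Bad).card
  let n := Fintype.card (Fin m → X)
  let E : (Fin m × Bool → X) ≃ (Fin m → X) × (Fin m → X) :=
    { toFun := fun z => (fun i => z (i, false), fun i => z (i, true))
      invFun := fun q y => if y.2 then q.2 y.1 else q.1 y.1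
      left_inv := by
        intro z; funext ⟨i, b⟩; cases b <;> simp
      right_inv := by
        intro q; simp }
  have hn : 0 < n := Fintype.card_pos
  have hcardz : Fintype.card (Fin m × Bool → X) = n * n := by
    rw [Fintype.card_congr E, Fintype.card_prod]
  have hlow : n * n ≤ 2 * c * K := by
    have hK : K = ∑ x : Fin m → X, ∑ y : Fin m → X, if Bad (E.symm (x, y)) then 1 else 0 := by
      simp only [K, Finset.card_filter]
      rw [Fintype.sum_equiv E _ (fun q => if Bad (E.symm q) then 1 else 0) (by intro z; simp),
        Fintype.sum_prod_type]
    rw [hK, Finset.mul_sum]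
    calc n * n = ∑ x : Fin m → X, n := by simp [n]
      _ ≤ _ := Finset.sum_le_sum (fun x _ => ?_)
    obtain ⟨v, hv, hx⟩ := hcon x
    refine (pq_many c r hr (Finset.univ.filter (fun t => R v t)) (hbig v hv)).trans ?_
    rw [← Finset.card_filter]
    refine Nat.mul_le_mul_left _ (Finset.card_le_card ?_)
    intro y hy
    simp only [Finset.mem_filter, Finset.mem_univ, true_and] at hy ⊢
    exact ⟨v, hv, by simpa [E] using hx, by simpa [E] using hy⟩
  have hup : 2 ^ r * K ≤ M * (n * n) := by
    let sw : (Fin m → Bool) → (Fin m × Bool → X) ≃ (Fin m × Bool → X) := fun σ =>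
      { toFun := fun z y => z (y.1, xor y.2 (σ y.1))
        invFun := fun z y => z (y.1, xor y.2 (σ y.1))
        left_inv := by intro z; funext y; simp
        right_inv := by intro z; funext y; simp }
    have hsw : ∀ σ, K = ∑ z, if Bad (sw σ z) then 1 else 0 := by
      intro σ
      simp only [K, Finset.card_filter]
      exact (Fintype.sum_equiv (sw σ) _ _ (fun z => rfl)).symm
    have h1 : 2 ^ m * K = ∑ z, (Finset.univ.filter (fun σ => Bad (sw σ z))).card := by
      calc 2 ^ m * K = ∑ σ : Fin m → Bool, K := by simp
        _ = ∑ σ : Fin m → Bool, ∑ z, if Bad (sw σ z) then 1 else 0 :=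
          Finset.sum_congr rfl (fun σ _ => hsw σ)
        _ = _ := by rw [Finset.sum_comm]; simp only [Finset.card_filter]
    have h2 : ∀ z, 2 ^ r * (Finset.univ.filter (fun σ => Bad (sw σ z))).card ≤ M * 2 ^ m := by
      intro z
      let 𝒜 := V.image (fun v => Finset.univ.filter (fun y => R v (z y)))
      have hsub : (Finset.univ.filter (fun σ => Bad (sw σ z))) ⊆ 𝒜.biUnion (fun s =>
          ((Finset.univ : Finset (Fin m → Bool)).filter (fun σ =>
      (∀ i, (i, σ i) ∉ s) ∧
        r ≤ (Finset.univ.filter (fun i => (i, !(σ i)) ∈ s)).card))) := by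
        intro σ hσ
        simp only [Finset.mem_filter, Finset.mem_univ, true_and] at hσ
        obtain ⟨v, hv, ha, hb⟩ := hσ
        refine Finset.mem_biUnion.mpr ⟨_, Finset.mem_image_of_mem _ hv, ?_⟩
        simp only [Finset.mem_filter, Finset.mem_univ, true_and]
        exact ⟨by simpa [sw] using ha, by simpa [sw] using hb⟩
      calc _ ≤ 2 ^ r * ∑ s ∈ 𝒜, _ :=
            Nat.mul_le_mul_left _ ((Finset.card_le_card hsub).trans Finset.card_biUnion_le)
        _ ≤ ∑ s ∈ 𝒜, 2 ^ m := by
            rw [Finset.mul_sum]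
            exact Finset.sum_le_sum (fun s _ => pq_swap_count m r s)
        _ ≤ M * 2 ^ m := by
            rw [Finset.sum_const, smul_eq_mul]
            exact Nat.mul_le_mul_right _ (hpi z)
    have h3 : 2 ^ m * (2 ^ r * K) ≤ 2 ^ m * (M * (n * n)) := by
      calc 2 ^ m * (2 ^ r * K) = 2 ^ r * (2 ^ m * K) := by ring
        _ = ∑ z, 2 ^ r * (Finset.univ.filter (fun σ => Bad (sw σ z))).card := by
          rw [h1, Finset.mul_sum]
        _ ≤ ∑ z : Fin m × Bool → X, M * 2 ^ m := Finset.sum_le_sum (fun z _ => h2 z)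
        _ = (n * n) * (M * 2 ^ m) := by
          rw [Finset.sum_const, Finset.card_univ, hcardz, smul_eq_mul]
        _ = _ := by ring
    exact Nat.le_of_mul_le_mul_left h3 (by positivity)
  have h4 : 2 ^ r * (n * n) ≤ (2 * c * M) * (n * n) := by
    calc 2 ^ r * (n * n) ≤ 2 ^ r * (2 * c * K) := Nat.mul_le_mul_left _ hlow
      _ = 2 * c * (2 ^ r * K) := by ring
      _ ≤ 2 * c * (M * (n * n)) := Nat.mul_le_mul_left _ hup
      _ = _ := by ring
  have := Nat.le_of_mul_le_mul_right h4 (Nat.mul_pos hn hn)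
  omega

theorem pq_exists_r (c D : ℕ) : ∃ r : ℕ, 0 < r ∧
    2 * c * ((D + 1) * (2 * (2 * c * r)) ^ D) < 2 ^ r := by
  have h := tendsto_pow_const_div_const_pow_of_one_lt D (r := (2 : ℝ)) (by norm_num)
  set C : ℝ := 2 * c * ((D + 1) * (4 * c) ^ D) with hC
  have h2 : Tendsto (fun n : ℕ => C * ((n : ℝ) ^ D / 2 ^ n)) atTop (nhds 0) := by
    simpa using h.const_mul C
  obtain ⟨r, hr, hr0⟩ := ((h2.eventually (gt_mem_nhds (by norm_num : (0 : ℝ) < 1))).and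
    (eventually_gt_atTop 0)).exists
  refine ⟨r, hr0, ?_⟩
  rw [← mul_div_assoc, div_lt_one (by positivity)] at hr
  have : ((2 * c * ((D + 1) * (2 * (2 * c * r)) ^ D) : ℕ) : ℝ) < ((2 ^ r : ℕ) : ℝ) := by
    push_cast
    calc _ = C * (r : ℝ) ^ D := by
          rw [hC, show (2 * (2 * (c : ℝ) * r)) = (4 * c) * r by ring, mul_pow]; ring
      _ < _ := hr
  exact_mod_cast this

theorem pq_exists_c (B : ℕ) (hB : 0 < B) :
    ∃ c : ℕ, 0 < c ∧ (2 - 1 / (B : ℝ)) ^ c * 4 < 2 ^ c := by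
  have hBr : (1 : ℝ) ≤ B := by exact_mod_cast hB
  have h2 : 1 / (B : ℝ) ≤ 1 := by
    rw [div_le_one (by linarith)]; exact hBr
  have h3 : 0 < 1 / (B : ℝ) := by positivity
  obtain ⟨c, hc⟩ := exists_pow_lt_of_lt_one (x := (1 / 4 : ℝ)) (y := (2 - 1 / (B : ℝ)) / 2)
    (by norm_num) (by linarith)
  refine ⟨c, ?_, ?_⟩
  · rcases Nat.eq_zero_or_pos c with h | h
    · subst h; norm_num at hc
    · exact h
  · rw [div_pow, div_lt_iff₀ (by positivity)] at hc
    linarith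

theorem pq_sauer {α : Type*} [Fintype α] [DecidableEq α] (𝒜 : Finset (Finset α)) (D : ℕ)
    (h : 𝒜.vcDim ≤ D) (hα : 0 < Fintype.card α) :
    𝒜.card ≤ (D + 1) * (Fintype.card α) ^ D := by
  refine (Finset.card_le_card_shatterer 𝒜).trans (Finset.card_shatterer_le_sum_vcDim.trans ?_)
  calc _ ≤ ∑ k ∈ Finset.Iic 𝒜.vcDim, (Fintype.card α) ^ D := by
        refine Finset.sum_le_sum (fun i hi => (Nat.choose_le_pow _ _).trans ?_)
        exact Nat.pow_le_pow_right hα ((Finset.mem_Iic.mp hi).trans h)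
    _ ≤ _ := by
        rw [Finset.sum_const, smul_eq_mul, Nat.card_Iic]
        exact Nat.mul_le_mul_right _ (by omega)

theorem pq_theorem {U : Type*} (𝓕 : Set (Set U)) (k : ℕ) (h : ℕ → ℝ)
    (hshatter : ∀ (m : ℕ) (A : Finset U), A.card ≤ m →
      ((((fun F => F ∩ (A : Set U)) '' 𝓕).ncard : ℝ) ≤ h m))
    (hsmall : Tendsto (fun m : ℕ => h m / (m : ℝ) ^ k) atTop (nhds 0))
    (p : ℕ) (hp : k ≤ p) :
    ∃ N : ℕ, ∀ V : Finset U,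
      (∀ V' ⊆ V, V'.card ≤ p → ∃ F ∈ 𝓕, (V' : Set U) ⊆ F) →
      ∃ 𝓕' ⊆ 𝓕, 𝓕'.Finite ∧ 𝓕'.ncard ≤ N ∧ (V : Set U) ⊆ ⋃₀ 𝓕' := by
  classical
  rcases Nat.eq_zero_or_pos k with hk | hk
  · subst hk
    refine ⟨0, fun V hV => ?_⟩
    exfalso
    obtain ⟨F, hF, _⟩ := hV ∅ (by simp) (by simp)
    obtain ⟨m, hm⟩ := (hsmall.eventually (gt_mem_nhds (by norm_num : (0 : ℝ) < 1))).exists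
    have h1 := hshatter m ∅ (by simp)
    have h2 : ((fun F => F ∩ ((∅ : Finset U) : Set U)) '' 𝓕).ncard = 1 := by
      rw [Set.ncard_eq_one]
      refine ⟨∅, ?_⟩
      ext S
      simp only [Finset.coe_empty, Set.inter_empty, Set.mem_image, Set.mem_singleton_iff]
      exact ⟨fun ⟨_, _, h⟩ => h.symm, fun h => ⟨F, hF, h.symm⟩⟩
    rw [h2] at h1
    simp at hm h1
    linarith
  -- the constants
  obtain ⟨n, hn0, hn⟩ : ∃ n : ℕ, 0 < n ∧ h (k * n) < (n : ℝ) ^ k := by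
    have ht : Tendsto (fun n : ℕ => k * n) atTop atTop :=
      tendsto_id.const_mul_atTop' hk
    have h1 := (hsmall.comp ht).eventually
      (gt_mem_nhds (by positivity : (0 : ℝ) < 1 / (k : ℝ) ^ k))
    obtain ⟨n, hn, hn0⟩ := (h1.and (eventually_gt_atTop 0)).exists
    refine ⟨n, hn0, ?_⟩
    simp only [Function.comp] at hn
    rw [div_lt_iff₀ (by positivity)] at hn
    push_cast at hn
    rw [mul_pow, one_div, inv_mul_cancel_left₀ (by positivity)] at hn
    exact hn
  obtain ⟨d, hd⟩ : ∃ d : ℕ, h d < (2 : ℝ) ^ d := by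
    have h1 := hsmall.eventually (gt_mem_nhds (by norm_num : (0 : ℝ) < 1))
    have h2 := (tendsto_pow_const_div_const_pow_of_one_lt k (r := (2 : ℝ))
      (by norm_num)).eventually (gt_mem_nhds (by norm_num : (0 : ℝ) < 1))
    obtain ⟨d, ⟨h1, h2⟩, h3⟩ := ((h1.and h2).and (eventually_gt_atTop 0)).exists
    refine ⟨d, ?_⟩
    rw [div_lt_one (by positivity)] at h1 h2
    exact h1.trans h2
  have hn' : ∀ A : Finset U, A.card ≤ k * n →
      ((fun F => F ∩ (A : Set U)) '' 𝓕).ncard < n ^ k := by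
    intro A hA
    exact_mod_cast (hshatter _ A hA).trans_lt hn
  have hd' : ∀ A : Finset U, A.card ≤ d →
      ((fun F => F ∩ (A : Set U)) '' 𝓕).ncard < 2 ^ d := by
    intro A hA
    exact_mod_cast (hshatter _ A hA).trans_lt hd
  have hB : 0 < n ^ k * (k * n) := by positivity
  obtain ⟨c, hc0, hc⟩ := pq_exists_c _ hB
  obtain ⟨r, hr0, hr⟩ := pq_exists_r c (2 ^ d)
  refine ⟨2 * c * r, fun V hV => ?_⟩
  rcases V.eq_empty_or_nonempty with rfl | hVne
  · exact ⟨∅, by simp, by simp, by simp, by simp⟩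
  have hs0 : 0 < V.card := hVne.card_pos
  obtain ⟨G, hG, hle⟩ := pq_mw 𝓕 _ V
    (pq_weighted 𝓕 k n hn' V (fun V' h1 h2 => hV V' h1 (h2.trans hp))) hB (c * V.card)
  have : Nonempty (Fin (c * V.card)) := ⟨⟨0, by positivity⟩⟩
  have hbig : ∀ v ∈ V, Fintype.card (Fin (c * V.card)) ≤
      c * (Finset.univ.filter (fun t => v ∈ G t)).card := by
    intro v hv
    rw [Fintype.card_fin]
    refine Nat.mul_le_mul_left _ ?_
    by_contra! hlt
    have h1 := (Finset.single_le_sum (f := fun v =>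
      (2 : ℝ) ^ ((Finset.univ.filter (fun t => v ∉ G t)).card)) (fun _ _ => by positivity)
      hv).trans hle
    have h2 : (Finset.univ.filter (fun t => v ∈ G t)).card +
        (Finset.univ.filter (fun t => v ∉ G t)).card = c * V.card := by
      rw [Finset.card_filter_add_card_filter_not]
      simp
    have h3 : (2 : ℝ) ^ (c * V.card) ≤
        2 ^ V.card * 2 ^ ((Finset.univ.filter (fun t => v ∉ G t)).card) := by
      rw [← pow_add]
      exact pow_le_pow_right₀ (by norm_num) (by omega)
    have hBr : (1 : ℝ) ≤ ((n ^ k * (k * n) : ℕ) : ℝ) := by exact_mod_cast hB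
    set q : ℝ := 2 - 1 / ((n ^ k * (k * n) : ℕ) : ℝ) with hq
    have hq0 : 0 < q := by
      have : 1 / ((n ^ k * (k * n) : ℕ) : ℝ) ≤ 1 := by
        rw [div_le_one (by linarith)]; exact hBr
      linarith
    have h4 : q ^ (c * V.card) * 4 ^ V.card ≤ 2 ^ (c * V.card) := by
      rw [pow_mul, pow_mul, ← mul_pow]
      exact pow_le_pow_left₀ (by positivity) hc.le V.card
    have h5 : (V.card : ℝ) < 2 ^ V.card := by exact_mod_cast Nat.lt_two_pow_self
    have h6 : (4 : ℝ) ^ V.card = 2 ^ V.card * 2 ^ V.card := by rw [← mul_pow]; norm_num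
    have hQ : 0 < q ^ (c * V.card) := by positivity
    have h7 : q ^ (c * V.card) * (2 ^ V.card * 2 ^ V.card) ≤ q ^ (c * V.card) * (2 ^ V.card * V.card) := by
      rw [← h6]
      calc _ ≤ (2 : ℝ) ^ (c * V.card) := h4
        _ ≤ _ := h3
        _ ≤ 2 ^ V.card * (V.card * q ^ (c * V.card)) := mul_le_mul_of_nonneg_left h1 (by positivity)
        _ = _ := by ring
    have h8 := le_of_mul_le_mul_left (le_of_mul_le_mul_left h7 hQ) (by positivity)
    linarith
  obtain ⟨x, hx⟩ := pq_net V (fun v t => v ∈ G t) c r _ hr0 hr hbig (by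
    intro z
    have h1 := pq_dualvc 𝓕 d hd' V (fun y => G (z y)) (fun y => hG _)
    refine (pq_sauer _ _ h1 ?_).trans ?_
    · simp only [Fintype.card_prod, Fintype.card_fin, Fintype.card_bool]
      positivity
    · simp [mul_comm])
  refine ⟨Set.range (fun i => G (x i)), ?_, Set.finite_range _, ?_, ?_⟩
  · rintro _ ⟨i, rfl⟩
    exact hG _
  · rw [← Set.image_univ]
    refine (Set.ncard_image_le Set.finite_univ).trans ?_
    simp [Set.ncard_univ]
  · intro v hv
    obtain ⟨i, hi⟩ := hx v hv
    exact ⟨_, ⟨i, rfl⟩, hi⟩
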